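/- arXiv:1612.08773 — 4 statements merged into one kernel-verified Lean document; each statement's English description precedes it below -/
import Mathlib

section
/- For every real number v ≥ 1, one has v²(log v)² + 2v²(log v) − v² + 1 ≥ 0. -/
open InformationTheory

theorem klFun_pow (x : ℝ) (n : ℕ) :
    klFun (x ^ n) = n * x ^ n * Real.log x + 1 - x ^ n := by
  rw [klFun_apply, Real.log_pow]
  ring

theorem aux_f1_nonneg_general {v : ℝ} (hv : 0 < v) :
    0 ≤ v ^ 2 * Real.log v ^ 2 + 2 * v ^ 2 * Real.log v - v ^ 2 + 1 := by
  have klFun_sq_nonneg : 0 ≤ klFun (v ^ 2) := klFun_nonneg (pow_pos hv 2).le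
  calc
    0 ≤ (v * Real.log v) ^ 2 + klFun (v ^ 2) := add_nonneg (sq_nonneg _) klFun_sq_nonneg
    _ = v ^ 2 * Real.log v ^ 2 + 2 * v ^ 2 * Real.log v - v ^ 2 + 1 := by
      rw [klFun_pow]
      push_cast
      ring

/-- For every real `v ≥ 1`, `v²(log v)² + 2v²(log v) − v² + 1 ≥ 0`. -/
theorem aux_f1_nonneg (v : ℝ) (hv : 1 ≤ v) :
    0 ≤ v ^ 2 * Real.log v ^ 2 + 2 * v ^ 2 * Real.log v - v ^ 2 + 1 :=
  aux_f1_nonneg_general (zero_lt_one.trans_le hv)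
end

section
/- For every real number v ≥ 1, one has v + 1/v − 2 ≤ v(log v)². -/
theorem add_one_div_sub_two_eq_mul_sq {K : Type*} [Field K] {x : K} (hx : x ≠ 0) :
    x + 1 / x - 2 = x * (1 - x⁻¹) ^ 2 := by
  field_simp
  ring

theorem sq_one_sub_inv_le_sq_log {x : ℝ} (hx : 1 ≤ x) :
    (1 - x⁻¹) ^ 2 ≤ Real.log x ^ 2 := by
  have one_sub_inv_nonneg : 0 ≤ 1 - x⁻¹ := sub_nonneg.mpr (inv_le_one_of_one_le₀ hx)
  have one_sub_inv_le_log : 1 - x⁻¹ ≤ Real.log x :=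
    Real.one_sub_inv_le_log_of_pos (zero_lt_one.trans_le hx)
  gcongr

/-- For every real `v ≥ 1`, `v + 1/v − 2 ≤ v (log v)²`. -/
theorem f_nonpos (v : ℝ) (hv : 1 ≤ v) :
    v + 1 / v - 2 ≤ v * Real.log v ^ 2 := by
  have v_pos : 0 < v := zero_lt_one.trans_le hv
  calc
    v + 1 / v - 2 = v * (1 - v⁻¹) ^ 2 := add_one_div_sub_two_eq_mul_sq v_pos.ne'
    _ ≤ v * Real.log v ^ 2 :=
      mul_le_mul_of_nonneg_left (sq_one_sub_inv_le_sq_log hv) v_pos.le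
end

section
/- For every real number γ > 0, the infimum over s ∈ (0,∞) of the quantity −sγ + s²e^s/2 is at most −(γ/2)·log(γ/(2e)). -/
/-!
The bound is itself a transform: `-(γ / 2) * log (γ / (2e))` is the minimum over all real `s` of
`-s * γ + exp (2 * s)`, attained at `s = log (γ / 2) / 2`. Since `s ^ 2 * exp s / 2 ≤ exp (2 * s)`
for `s ≥ 0`, evaluating at this minimizer suffices when it is nonnegative. Otherwise `γ < 2`, the
bound is positive, and letting `s → 0` already shows that the infimum is at most `0`.
-/

theorem csInf_image_le_of_mem_closure {X α : Type*} [TopologicalSpace X]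
    [ConditionallyCompleteLattice α] [TopologicalSpace α] [ClosedIciTopology α]
    {φ : X → α} {S : Set X} {x : X} (hbdd : BddBelow (φ '' S)) (hx : x ∈ closure S)
    (hφ : ContinuousWithinAt φ S x) : sInf (φ '' S) ≤ φ x := by
  have hlower : sInf (φ '' S) ∈ lowerBounds (closure (φ '' S)) := by
    rw [lowerBounds_closure]
    exact fun _ hy => csInf_le hbdd hy
  exact hlower (hφ.mem_closure_image hx)

/-- The Legendre-type transform `f̂(γ) = inf_{s ∈ S} (-sγ + f(s))` of `f` over `S`, which is minus
the convex conjugate. As an infimum of reals it is meaningful only when the values are bounded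
below on a nonempty `S`; otherwise `sInf` returns `0`. -/
noncomputable def infConjugate (f : ℝ → ℝ) (S : Set ℝ) (γ : ℝ) : ℝ :=
  sInf ((fun s => -s * γ + f s) '' S)

theorem infConjugate_le_of_mem_closure {f : ℝ → ℝ} {S : Set ℝ} {γ s : ℝ}
    (hbdd : BddBelow ((fun s => -s * γ + f s) '' S)) (hs : s ∈ closure S)
    (hf : ContinuousWithinAt f S s) : infConjugate f S γ ≤ -s * γ + f s :=
  csInf_image_le_of_mem_closure (φ := fun s => -s * γ + f s) hbdd hs (by fun_prop)

theorem bddBelow_image_neg_mul_add_of_mul_sq_le {f : ℝ → ℝ} {S : Set ℝ} {c : ℝ} (hc : 0 < c)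
    (hf : ∀ s ∈ S, c * s ^ 2 ≤ f s) (γ : ℝ) : BddBelow ((fun s => -s * γ + f s) '' S) := by
  refine ⟨-(γ ^ 2 / (4 * c)), ?_⟩
  rintro _ ⟨s, hs, rfl⟩
  calc -(γ ^ 2 / (4 * c))
      ≤ c * (s - γ / (2 * c)) ^ 2 - γ ^ 2 / (4 * c) := by
        linarith [mul_nonneg hc.le (sq_nonneg (s - γ / (2 * c)))]
    _ = -s * γ + c * s ^ 2 := by field_simp; ring
    _ ≤ -s * γ + f s := by gcongr; exact hf s hs

theorem log_div_mul_exp_one {x c : ℝ} (hx : 0 < x) (hc : 0 < c) :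
    Real.log (x / (c * Real.exp 1)) = Real.log (x / c) - 1 := by
  rw [← div_div, Real.log_div (by positivity) (Real.exp_ne_zero 1), Real.log_exp]

theorem neg_mul_add_mul_exp_at_minimizer {a b γ : ℝ} (ha : 0 < a) (hb : 0 < b) (hγ : 0 < γ) :
    -(Real.log (γ / (a * b)) / b) * γ + a * Real.exp (b * (Real.log (γ / (a * b)) / b)) =
      -(γ / b) * Real.log (γ / (a * b * Real.exp 1)) := by
  rw [log_div_mul_exp_one hγ (mul_pos ha hb), mul_div_cancel₀ _ hb.ne',
    Real.exp_log (by positivity)]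
  field_simp
  ring

theorem infConjugate_Ioi_le_of_le_mul_exp {f : ℝ → ℝ} {a b γ : ℝ} (ha : 0 < a) (hb : 0 < b)
    (hγ : 0 < γ) (hbdd : BddBelow ((fun s => -s * γ + f s) '' Set.Ioi 0))
    (hcont : ContinuousOn f (Set.Ici 0)) (hzero : f 0 ≤ 0)
    (hle : ∀ s, 0 ≤ s → f s ≤ a * Real.exp (b * s)) :
    infConjugate f (Set.Ioi 0) γ ≤ -(γ / b) * Real.log (γ / (a * b * Real.exp 1)) := by
  have eval_le {s : ℝ} (hs : 0 ≤ s) : infConjugate f (Set.Ioi 0) γ ≤ -s * γ + f s :=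
    infConjugate_le_of_mem_closure hbdd (by rwa [closure_Ioi])
      ((hcont s hs).mono Set.Ioi_subset_Ici_self)
  rcases le_total 0 (Real.log (γ / (a * b))) with hlog | hlog
  · have hmin : 0 ≤ Real.log (γ / (a * b)) / b := by positivity
    rw [← neg_mul_add_mul_exp_at_minimizer ha hb hγ]
    exact (eval_le hmin).trans (by gcongr; exact hle _ hmin)
  · have hbound : 0 ≤ -(γ / b) * Real.log (γ / (a * b * Real.exp 1)) := by
      rw [log_div_mul_exp_one hγ (mul_pos ha hb)]
      exact mul_nonneg_of_nonpos_of_nonpos (neg_nonpos.2 (by positivity)) (by linarith)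
    linarith [eval_le le_rfl]

theorem half_mul_sq_le_sq_mul_exp_div_two {s : ℝ} (hs : 0 ≤ s) :
    1 / 2 * s ^ 2 ≤ s ^ 2 * Real.exp s / 2 := by
  linarith [le_mul_of_one_le_right (sq_nonneg s) (Real.one_le_exp hs)]

theorem sq_mul_exp_div_two_le_exp_two_mul {s : ℝ} (hs : 0 ≤ s) :
    s ^ 2 * Real.exp s / 2 ≤ Real.exp (2 * s) :=
  calc s ^ 2 * Real.exp s / 2 = s ^ 2 / (Nat.factorial 2 : ℝ) * Real.exp s := by
        rw [Nat.factorial_two]; push_cast; ring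
    _ ≤ Real.exp s * Real.exp s := by gcongr; exact Real.pow_div_factorial_le_exp s hs 2
    _ = Real.exp (2 * s) := by rw [← Real.exp_add, two_mul]

/-- For every real `γ > 0`, the infimum over `s ∈ (0,∞)` of `−sγ + s²e^s/2` is at most
`−(γ/2)·log(γ/(2e))`. -/
theorem legendre_transform_bound (γ : ℝ) (hγ : 0 < γ) :
    sInf ((fun s : ℝ => -s * γ + s ^ 2 * Real.exp s / 2) '' Set.Ioi 0) ≤
      -(γ / 2) * Real.log (γ / (2 * Real.exp 1)) := by
  have hbdd : BddBelow ((fun s : ℝ => -s * γ + s ^ 2 * Real.exp s / 2) '' Set.Ioi 0) :=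
    bddBelow_image_neg_mul_add_of_mul_sq_le one_half_pos
      (fun _ hs => half_mul_sq_le_sq_mul_exp_div_two (Set.mem_Ioi.1 hs).le) γ
  have hle (s : ℝ) (hs : 0 ≤ s) : s ^ 2 * Real.exp s / 2 ≤ 1 * Real.exp (2 * s) := by
    simpa only [one_mul] using sq_mul_exp_div_two_le_exp_two_mul hs
  simpa only [infConjugate, one_mul] using
    infConjugate_Ioi_le_of_le_mul_exp one_pos two_pos hγ hbdd (by fun_prop) (by simp) hle
end

section
/- Let r, t, D > 0, m > 0 and Λ ≥ 0 be real numbers such that 2r/(D e t) > 1 and (r/2)·log(2r/(D e t)) ≥ m. For each natural number k set a_k = (2^{k+1} r)^m · exp(−(2^k r/2)·log(2^k r/(2 D e t)) − Λ t). Then for every natural number k, a_{k+1} ≤ (2/e)^m · a_k. -/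
/-!
Doubling `s` multiplies the bound `(2s)^m exp(-(s/2) log(s/(2c)) - b)` by exactly
`2^m exp(-(s/2) log(2s/c))`, since `s/(2c) · 2s/c = (s/c)^2`. As `x log x` is increasing for
`x ≥ 1/e`, the inequality `m ≤ (s/2) log(2s/c)` propagates from `s = r` to all `s ≥ r`, and it
bounds the factor by `(2/e)^m`.
-/

open Real

theorem div_exp_one_rpow {x : ℝ} (hx : 0 ≤ x) (m : ℝ) :
    (x / exp 1) ^ m = x ^ m * exp (-m) := by
  rw [div_rpow hx (exp_pos 1).le, exp_one_rpow, exp_neg, div_eq_mul_inv]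

theorem mul_log_mul_le_mul_log_mul {q r s : ℝ} (hq : 0 < q) (hqr : exp (-1) ≤ q * r)
    (hrs : r ≤ s) : r * log (q * r) ≤ s * log (q * s) := by
  have hqrs : q * r ≤ q * s := by gcongr
  have hmono : q * r * log (q * r) ≤ q * s * log (q * s) :=
    mul_log_strictMonoOn.monotoneOn hqr (hqr.trans hqrs) hqrs
  rw [mul_assoc, mul_assoc] at hmono
  exact le_of_mul_le_mul_left hmono hq

theorem log_div_two_mul_add_log_two_mul_div {s c : ℝ} (hs : s ≠ 0) (hc : c ≠ 0) :
    log (s / (2 * c)) + log (2 * s / c) = 2 * log (s / c) := by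
  rw [log_div hs (by positivity), log_div (by positivity) hc, log_div hs hc,
    log_mul two_ne_zero hc, log_mul two_ne_zero hs]
  ring

/-- The bound for the contribution of the annulus `B(x, 2s) \ B(x, s)`: the volume factor
`(2s)^m` times the exponential off-diagonal decay at distance `s`. The paper's parameters enter as
`c = D e t` and `b = Λ t`, so that `a_k` is the value at `s = 2^k r`. -/
noncomputable def annulusBound (m c b s : ℝ) : ℝ :=
  (2 * s) ^ m * exp (-(s / 2) * log (s / (2 * c)) - b)

theorem annulusBound_two_pow_mul (m D t Λ r : ℝ) (k : ℕ) :
    annulusBound m (D * exp 1 * t) (Λ * t) (2 ^ k * r) = (2 ^ (k + 1) * r) ^ m *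
      exp (-(2 ^ k * r / 2) * log (2 ^ k * r / (2 * D * exp 1 * t)) - Λ * t) := by
  simp only [annulusBound, pow_succ', mul_assoc]

theorem annulusBound_nonneg {s : ℝ} (hs : 0 ≤ s) (m c b : ℝ) : 0 ≤ annulusBound m c b s := by
  unfold annulusBound
  positivity

theorem annulusBound_two_mul {c s : ℝ} (hc : c ≠ 0) (hs : 0 < s) (m b : ℝ) :
    annulusBound m c b (2 * s) =
      2 ^ m * exp (-(s / 2 * log (2 * s / c))) * annulusBound m c b s := by
  have hexponent : -(2 * s / 2) * log (2 * s / (2 * c)) - b =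
      -(s / 2 * log (2 * s / c)) + (-(s / 2) * log (s / (2 * c)) - b) := by
    rw [mul_div_mul_left s c two_ne_zero]
    linear_combination s / 2 * log_div_two_mul_add_log_two_mul_div hs.ne' hc
  rw [annulusBound, annulusBound, hexponent, exp_add, mul_rpow zero_le_two (by positivity)]
  ring

theorem annuli_ratio_bound_general {m c r s : ℝ} (hc : 0 < c) (hr : exp (-1) ≤ 2 * r / c)
    (hm : m ≤ r / 2 * log (2 * r / c)) (hrs : r ≤ s) (b : ℝ) :
    annulusBound m c b (2 * s) ≤ (2 / exp 1) ^ m * annulusBound m c b s := by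
  have hr_pos : 0 < r := by
    have : 0 < 2 * r := (div_pos_iff_of_pos_right hc).1 ((exp_pos _).trans_le hr)
    linarith
  have hs : 0 < s := hr_pos.trans_le hrs
  have hmono : r * log (2 * r / c) ≤ s * log (2 * s / c) := by
    rw [mul_div_right_comm] at hr
    simpa only [mul_div_right_comm] using mul_log_mul_le_mul_log_mul (by positivity) hr hrs
  have hms : m ≤ s / 2 * log (2 * s / c) := by linarith
  have hbound : 0 ≤ annulusBound m c b s := annulusBound_nonneg hs.le m c b
  rw [annulusBound_two_mul hc.ne' hs, div_exp_one_rpow zero_le_two]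
  gcongr

/-- Ratio bound `a_{k+1} ≤ (2/e)^m a_k` for the dyadic-annuli sequence in the proof of
Theorem 3.2. -/
theorem annuli_ratio_bound (r t D m Λ : ℝ) (hr : 0 < r) (ht : 0 < t) (hD : 0 < D)
    (hm : 0 < m) (hΛ : 0 ≤ Λ)
    (h1 : 1 < 2 * r / (D * Real.exp 1 * t))
    (h2 : m ≤ r / 2 * Real.log (2 * r / (D * Real.exp 1 * t)))
    (a : ℕ → ℝ)
    (ha : ∀ k : ℕ, a k = (2 ^ (k + 1) * r) ^ m *
      Real.exp (-(2 ^ k * r / 2) * Real.log (2 ^ k * r / (2 * D * Real.exp 1 * t)) - Λ * t)) :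
    ∀ k : ℕ, a (k + 1) ≤ (2 / Real.exp 1) ^ m * a k := by
  intro k
  have hthreshold : exp (-1) ≤ 2 * r / (D * exp 1 * t) :=
    (exp_le_one_iff.2 (by norm_num)).trans h1.le
  simp only [ha, ← annulusBound_two_pow_mul]
  rw [pow_succ', mul_assoc 2]
  exact annuli_ratio_bound_general (by positivity) hthreshold h2
    (le_mul_of_one_le_left hr.le (one_le_pow₀ one_le_two)) (Λ * t)
end
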